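/- arXiv:1905.12380 — 3 statements merged into one kernel-verified Lean document; each statement's English description precedes it below -/
import Mathlib

section
/- Assume σ₁w₁′(r) = σ₂w₂′(r) > 0. Then: (i) if there exists s ∈ (−∞, r) such that w₁(s) = w₂(s) and w₁(ρ) < w₂(ρ) for every ρ ∈ (s, r), then w₁′(s) < 0 and w₂′(s) < 0; (ii) if there exists ℓ ∈ (r, ∞) such that w₁(ℓ) = w₂(ℓ) and w₁(ρ) > w₂(ρ) for every ρ ∈ (r, ℓ), then w₁′(ℓ) < 0 and w₂′(ℓ) < 0. -/
open Set

noncomputable section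

/-!
If `σⱼ wⱼ'' = f(ρ, wⱼ)` with `f` strictly increasing in its second argument, then on an interval
where `w₁ - w₂` keeps its sign the flux gap `σ₁ w₁' - σ₂ w₂'` is strictly monotone. Starting from a
nonnegative gap at `r`, the sign conditions make it positive at the other crossing. There the
graphs cross with `w₁' ≤ w₂'`, and since `0 ≤ σ₁ ≤ σ₂`, this is compatible with `σ₂ w₂' < σ₁ w₁'`
only if both slopes are negative.
-/

open scoped Topology

section OneSidedDerivatives

variable {u v : ℝ → ℝ} {u' v' a : ℝ}

lemma le_of_hasDerivWithinAt_Ioi (hu : HasDerivWithinAt u u' (Ioi a) a)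
    (hv : HasDerivWithinAt v v' (Ioi a) a) (ha : u a = v a) (huv : ∀ᶠ x in 𝓝[>] a, u x ≤ v x) :
    u' ≤ v' := by
  rw [hasDerivWithinAt_iff_tendsto_slope' self_notMem_Ioi] at hu hv
  refine le_of_tendsto_of_tendsto hu hv ?_
  filter_upwards [huv, self_mem_nhdsWithin] with x hx hax
  rw [slope_def_field, slope_def_field, ha]
  exact div_le_div_of_nonneg_right (sub_le_sub_right hx _) (sub_nonneg.2 hax.le)

lemma le_of_hasDerivWithinAt_Iio (hu : HasDerivWithinAt u u' (Iio a) a)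
    (hv : HasDerivWithinAt v v' (Iio a) a) (ha : u a = v a) (hvu : ∀ᶠ x in 𝓝[<] a, v x ≤ u x) :
    u' ≤ v' := by
  rw [hasDerivWithinAt_iff_tendsto_slope' self_notMem_Iio] at hu hv
  refine le_of_tendsto_of_tendsto hu hv ?_
  filter_upwards [hvu, self_mem_nhdsWithin] with x hx hxa
  rw [slope_def_field, slope_def_field, ha]
  exact div_le_div_of_nonpos_of_le (sub_nonpos.2 hxa.le) (sub_le_sub_right hx _)

end OneSidedDerivatives

lemma sub_lt_sub_of_hasDerivAt_lt {p q p' q' : ℝ → ℝ} {a b : ℝ} (hab : a < b)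
    (hpc : ContinuousOn p (Icc a b)) (hqc : ContinuousOn q (Icc a b))
    (hp : ∀ x ∈ Ioo a b, HasDerivAt p (p' x) x) (hq : ∀ x ∈ Ioo a b, HasDerivAt q (q' x) x)
    (hlt : ∀ x ∈ Ioo a b, p' x < q' x) : p b - q b < p a - q a := by
  have hanti : StrictAntiOn (fun x ↦ p x - q x) (Icc a b) := by
    refine strictAntiOn_of_hasDerivWithinAt_neg (f' := fun x ↦ p' x - q' x) (convex_Icc a b)
      (hpc.sub hqc) ?_ ?_ <;> rw [interior_Icc]
    · exact fun x hx ↦ ((hp x hx).sub (hq x hx)).hasDerivWithinAt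
    · exact fun x hx ↦ sub_neg.2 (hlt x hx)
  exact hanti (left_mem_Icc.2 hab.le) (right_mem_Icc.2 hab.le) hab

lemma neg_and_neg_of_le_of_mul_lt_mul {R : Type*} [Ring R] [LinearOrder R] [IsStrictOrderedRing R]
    {σ τ x y : R} (hσ : 0 ≤ σ) (hστ : σ ≤ τ) (hxy : x ≤ y) (h : τ * y < σ * x) :
    x < 0 ∧ y < 0 := by
  have hy : y < 0 := by
    by_contra! hy
    exact h.not_ge <|
      (mul_le_mul_of_nonneg_left hxy hσ).trans (mul_le_mul_of_nonneg_right hστ hy)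
  exact ⟨hxy.trans_lt hy, hy⟩

theorem stmt_14_general {σ₁ σ₂ : ℝ} (hσ₁ : 0 ≤ σ₁) (hσ₁₂ : σ₁ ≤ σ₂)
    {f : ℝ → ℝ → ℝ} (hf : ∀ ρ, StrictMono (f ρ)) {w₁ w₂ : ℝ → ℝ}
    (hw₁ : Differentiable ℝ w₁) (hw₁' : Differentiable ℝ (deriv w₁))
    (hw₂ : Differentiable ℝ w₂) (hw₂' : Differentiable ℝ (deriv w₂))
    (heq₁ : ∀ ρ, σ₁ * deriv (deriv w₁) ρ = f ρ (w₁ ρ))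
    (heq₂ : ∀ ρ, σ₂ * deriv (deriv w₂) ρ = f ρ (w₂ ρ))
    {r : ℝ} (hflux : σ₂ * deriv w₂ r ≤ σ₁ * deriv w₁ r) :
    (∀ s < r, w₁ s = w₂ s → (∀ ρ ∈ Ioo s r, w₁ ρ < w₂ ρ) → deriv w₁ s < 0 ∧ deriv w₂ s < 0) ∧
    (∀ l > r, w₁ l = w₂ l → (∀ ρ ∈ Ioo r l, w₁ ρ > w₂ ρ) → deriv w₁ l < 0 ∧ deriv w₂ l < 0) := by
  have hflux₁ (ρ : ℝ) : HasDerivAt (fun x ↦ σ₁ * deriv w₁ x) (f ρ (w₁ ρ)) ρ :=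
    heq₁ ρ ▸ (hw₁' ρ).hasDerivAt.const_mul σ₁
  have hcont₁ (a b : ℝ) : ContinuousOn (fun x ↦ σ₁ * deriv w₁ x) (Icc a b) :=
    HasDerivAt.continuousOn fun ρ _ ↦ hflux₁ ρ
  have hflux₂ (ρ : ℝ) : HasDerivAt (fun x ↦ σ₂ * deriv w₂ x) (f ρ (w₂ ρ)) ρ :=
    heq₂ ρ ▸ (hw₂' ρ).hasDerivAt.const_mul σ₂
  have hcont₂ (a b : ℝ) : ContinuousOn (fun x ↦ σ₂ * deriv w₂ x) (Icc a b) :=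
    HasDerivAt.continuousOn fun ρ _ ↦ hflux₂ ρ
  refine ⟨fun s hsr hs hlt ↦ ?_, fun l hrl hl hgt ↦ ?_⟩
  · have hslope : deriv w₁ s ≤ deriv w₂ s :=
      le_of_hasDerivWithinAt_Ioi (hw₁ s).hasDerivAt.hasDerivWithinAt
        (hw₂ s).hasDerivAt.hasDerivWithinAt hs <| by
          filter_upwards [Ioo_mem_nhdsGT hsr] with ρ hρ using (hlt ρ hρ).le
    have hgap := sub_lt_sub_of_hasDerivAt_lt hsr (hcont₁ s r) (hcont₂ s r)
      (fun ρ _ ↦ hflux₁ ρ) (fun ρ _ ↦ hflux₂ ρ) fun ρ hρ ↦ hf ρ (hlt ρ hρ)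
    exact neg_and_neg_of_le_of_mul_lt_mul hσ₁ hσ₁₂ hslope (by linarith)
  · have hslope : deriv w₁ l ≤ deriv w₂ l :=
      le_of_hasDerivWithinAt_Iio (hw₁ l).hasDerivAt.hasDerivWithinAt
        (hw₂ l).hasDerivAt.hasDerivWithinAt hl <| by
          filter_upwards [Ioo_mem_nhdsLT hrl] with ρ hρ using (hgt ρ hρ).le
    have hgap := sub_lt_sub_of_hasDerivAt_lt hrl (hcont₂ r l) (hcont₁ r l)
      (fun ρ _ ↦ hflux₂ ρ) (fun ρ _ ↦ hflux₁ ρ) fun ρ hρ ↦ hf ρ (hgt ρ hρ)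
    exact neg_and_neg_of_le_of_mul_lt_mul hσ₁ hσ₁₂ hslope (by linarith)

/-- **Proposition A.1(1) (ODE comparison, positive flux case).** -/
theorem stmt_14 (σ₁ σ₂ : ℝ) (hσ₁ : 0 < σ₁) (hσ₁₂ : σ₁ < σ₂)
    (w₁ w₂ : ℝ → ℝ)
    (hw₁ : Differentiable ℝ w₁) (hw₁' : Differentiable ℝ (deriv w₁))
    (hw₂ : Differentiable ℝ w₂) (hw₂' : Differentiable ℝ (deriv w₂))
    (heq₁ : ∀ ρ : ℝ, σ₁ * deriv (deriv w₁) ρ = w₁ ρ)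
    (heq₂ : ∀ ρ : ℝ, σ₂ * deriv (deriv w₂) ρ = w₂ ρ)
    (r : ℝ) (hval : w₁ r = w₂ r)
    (hflux : σ₁ * deriv w₁ r = σ₂ * deriv w₂ r) (hpos : 0 < σ₁ * deriv w₁ r) :
    (∀ s : ℝ, s < r → w₁ s = w₂ s → (∀ ρ ∈ Ioo s r, w₁ ρ < w₂ ρ) →
      deriv w₁ s < 0 ∧ deriv w₂ s < 0) ∧
    (∀ l : ℝ, r < l → w₁ l = w₂ l → (∀ ρ ∈ Ioo r l, w₁ ρ > w₂ ρ) →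
      deriv w₁ l < 0 ∧ deriv w₂ l < 0) := by
  exact stmt_14_general hσ₁.le hσ₁₂.le (f := fun _ ↦ id) (fun _ ↦ strictMono_id)
    hw₁ hw₁' hw₂ hw₂' heq₁ heq₂ hflux.ge
end
end

section
/- Assume σ₁w₁′(r) = σ₂w₂′(r) < 0. Then: (i) if there exists s ∈ (−∞, r) such that w₁(s) = w₂(s) and w₁(ρ) > w₂(ρ) for every ρ ∈ (s, r), then w₁′(s) > 0 and w₂′(s) > 0; (ii) if there exists ℓ ∈ (r, ∞) such that w₁(ℓ) = w₂(ℓ) and w₁(ρ) < w₂(ρ) for every ρ ∈ (r, ℓ), then w₁′(ℓ) > 0 and w₂′(ℓ) > 0. -/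
open Set

noncomputable section

/-!
At the contact point (`s` or `l`) the sign of `w₁ - w₂` on the adjacent interval gives `w₂' ≤ w₁'`.
On that interval the difference of fluxes `σ₁ w₁' - σ₂ w₂'` is strictly monotone, since its
derivative is `φ(w₁) - φ(w₂)` with `φ` increasing; it is not positive at `r`, so
`σ₁ w₁' < σ₂ w₂'` at the contact point. As `0 ≤ σ₁ < σ₂`, the two inequalities are compatible only
if both slopes are positive. The equation `σ w'' = w` is the case `φ = id`.
-/

open Filter Topology

theorem pos_and_pos_of_le_of_mul_lt_mul {R : Type*} [Ring R] [LinearOrder R] [IsStrictOrderedRing R]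
    {σ₁ σ₂ a b : R} (hσ₁ : 0 ≤ σ₁) (hσ : σ₁ < σ₂) (hba : b ≤ a) (h : σ₁ * a < σ₂ * b) :
    0 < a ∧ 0 < b := by
  have hσ₂ : 0 < σ₂ := hσ₁.trans_lt hσ
  have ha : 0 < a := by
    have hmul : σ₁ * a < σ₂ * a := h.trans_le (mul_le_mul_of_nonneg_left hba hσ₂.le)
    by_contra! ha
    exact hmul.not_ge (mul_le_mul_of_nonpos_right hσ.le ha)
  exact ⟨ha, pos_of_mul_pos_right ((mul_nonneg hσ₁ ha.le).trans_lt h) hσ₂.le⟩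

section OneVariable

variable {f g f' g' : ℝ → ℝ} {a b c d : ℝ}

theorem hasDerivWithinAt_Ioi_le_of_eventually_le (hf : HasDerivWithinAt f c (Ioi a) a)
    (hg : HasDerivWithinAt g d (Ioi a) a) (ha : g a ≤ f a) (h : ∀ᶠ x in 𝓝[>] a, f x ≤ g x) :
    c ≤ d := by
  rw [hasDerivWithinAt_iff_tendsto_slope' self_notMem_Ioi] at hf hg
  refine le_of_tendsto_of_tendsto hf hg ?_
  filter_upwards [h, self_mem_nhdsWithin] with x hx hax
  simp only [slope_def_field]
  exact div_le_div_of_nonneg_right (sub_le_sub hx ha) (sub_nonneg.2 (le_of_lt hax))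

theorem hasDerivWithinAt_Iio_le_of_eventually_ge (hf : HasDerivWithinAt f c (Iio a) a)
    (hg : HasDerivWithinAt g d (Iio a) a) (ha : f a ≤ g a) (h : ∀ᶠ x in 𝓝[<] a, g x ≤ f x) :
    c ≤ d := by
  rw [hasDerivWithinAt_iff_tendsto_slope' self_notMem_Iio] at hf hg
  refine le_of_tendsto_of_tendsto hf hg ?_
  filter_upwards [h, self_mem_nhdsWithin] with x hx hxa
  simp only [slope_def_field]
  exact div_le_div_of_nonpos_of_le (sub_nonpos.2 (le_of_lt hxa)) (sub_le_sub hx ha)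

theorem sub_lt_sub_of_hasDerivAt_lt_s15 (hab : a < b) (hfc : ContinuousOn f (Icc a b))
    (hgc : ContinuousOn g (Icc a b)) (hf : ∀ x ∈ Ioo a b, HasDerivAt f (f' x) x)
    (hg : ∀ x ∈ Ioo a b, HasDerivAt g (g' x) x) (h : ∀ x ∈ Ioo a b, f' x < g' x) :
    f b - f a < g b - g a := by
  have hmono : StrictMonoOn (g - f) (Icc a b) := by
    refine strictMonoOn_of_hasDerivWithinAt_pos (f' := g' - f') (convex_Icc a b) (hgc.sub hfc) ?_ ?_
    all_goals rw [interior_Icc]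
    · exact fun x hx => ((hg x hx).sub (hf x hx)).hasDerivWithinAt
    · exact fun x hx => sub_pos.2 (h x hx)
  have hlt : g a - f a < g b - f b :=
    hmono (left_mem_Icc.2 hab.le) (right_mem_Icc.2 hab.le) hab
  linarith

end OneVariable

theorem stmt_15_general {σ₁ σ₂ : ℝ} (hσ₁ : 0 ≤ σ₁) (hσ : σ₁ < σ₂) {φ : ℝ → ℝ} (hφ : StrictMono φ)
    {w₁ w₂ : ℝ → ℝ} (hw₁ : Differentiable ℝ w₁) (hw₁' : Differentiable ℝ (deriv w₁))
    (hw₂ : Differentiable ℝ w₂) (hw₂' : Differentiable ℝ (deriv w₂))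
    (heq₁ : ∀ ρ, σ₁ * deriv (deriv w₁) ρ = φ (w₁ ρ))
    (heq₂ : ∀ ρ, σ₂ * deriv (deriv w₂) ρ = φ (w₂ ρ))
    {r : ℝ} (hflux : σ₁ * deriv w₁ r ≤ σ₂ * deriv w₂ r) :
    (∀ s < r, w₁ s = w₂ s → (∀ ρ ∈ Ioo s r, w₂ ρ < w₁ ρ) → 0 < deriv w₁ s ∧ 0 < deriv w₂ s) ∧
    (∀ l > r, w₁ l = w₂ l → (∀ ρ ∈ Ioo r l, w₁ ρ < w₂ ρ) →
      0 < deriv w₁ l ∧ 0 < deriv w₂ l) := by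
  have hF₁ (x : ℝ) : HasDerivAt (fun y => σ₁ * deriv w₁ y) (φ (w₁ x)) x :=
    heq₁ x ▸ (hw₁' x).hasDerivAt.const_mul σ₁
  have hF₂ (x : ℝ) : HasDerivAt (fun y => σ₂ * deriv w₂ y) (φ (w₂ x)) x :=
    heq₂ x ▸ (hw₂' x).hasDerivAt.const_mul σ₂
  have hc₁ : Continuous fun y => σ₁ * deriv w₁ y := hw₁'.continuous.const_mul σ₁
  have hc₂ : Continuous fun y => σ₂ * deriv w₂ y := hw₂'.continuous.const_mul σ₂
  constructor
  · intro s hsr hs hlt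
    have hslope : deriv w₂ s ≤ deriv w₁ s :=
      hasDerivWithinAt_Ioi_le_of_eventually_le (hw₂ s).hasDerivAt.hasDerivWithinAt
        (hw₁ s).hasDerivAt.hasDerivWithinAt hs.le
        (eventually_of_mem (Ioo_mem_nhdsGT hsr) fun x hx => (hlt x hx).le)
    have hgrowth := sub_lt_sub_of_hasDerivAt_lt_s15 hsr hc₂.continuousOn hc₁.continuousOn
      (fun x _ => hF₂ x) (fun x _ => hF₁ x) fun x hx => hφ (hlt x hx)
    exact pos_and_pos_of_le_of_mul_lt_mul hσ₁ hσ hslope (by linarith)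
  · intro l hrl hl hlt
    have hslope : deriv w₂ l ≤ deriv w₁ l :=
      hasDerivWithinAt_Iio_le_of_eventually_ge (hw₂ l).hasDerivAt.hasDerivWithinAt
        (hw₁ l).hasDerivAt.hasDerivWithinAt hl.ge
        (eventually_of_mem (Ioo_mem_nhdsLT hrl) fun x hx => (hlt x hx).le)
    have hgrowth := sub_lt_sub_of_hasDerivAt_lt_s15 hrl hc₁.continuousOn hc₂.continuousOn
      (fun x _ => hF₁ x) (fun x _ => hF₂ x) fun x hx => hφ (hlt x hx)
    exact pos_and_pos_of_le_of_mul_lt_mul hσ₁ hσ hslope (by linarith)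

/-- **Proposition A.1(2) (ODE comparison, negative flux case).** -/
theorem stmt_15 (σ₁ σ₂ : ℝ) (hσ₁ : 0 < σ₁) (hσ₁₂ : σ₁ < σ₂)
    (w₁ w₂ : ℝ → ℝ)
    (hw₁ : Differentiable ℝ w₁) (hw₁' : Differentiable ℝ (deriv w₁))
    (hw₂ : Differentiable ℝ w₂) (hw₂' : Differentiable ℝ (deriv w₂))
    (heq₁ : ∀ ρ : ℝ, σ₁ * deriv (deriv w₁) ρ = w₁ ρ)
    (heq₂ : ∀ ρ : ℝ, σ₂ * deriv (deriv w₂) ρ = w₂ ρ)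
    (r : ℝ) (hval : w₁ r = w₂ r)
    (hflux : σ₁ * deriv w₁ r = σ₂ * deriv w₂ r) (hneg : σ₁ * deriv w₁ r < 0) :
    (∀ s : ℝ, s < r → w₁ s = w₂ s → (∀ ρ ∈ Ioo s r, w₁ ρ > w₂ ρ) →
      deriv w₁ s > 0 ∧ deriv w₂ s > 0) ∧
    (∀ l : ℝ, r < l → w₁ l = w₂ l → (∀ ρ ∈ Ioo r l, w₁ ρ < w₂ ρ) →
      deriv w₁ l > 0 ∧ deriv w₂ l > 0) :=
  stmt_15_general hσ₁.le hσ₁₂ strictMono_id hw₁ hw₁' hw₂ hw₂' heq₁ heq₂ hflux.le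
end
end

section
/- Let 0 < r₁ ≤ r₂ < ∞ and let σ_c, σ_s be positive constants with σ_c ≠ σ_s. For j = 1, 2 let w_j : [0,∞) → ℝ be bounded continuous functions that are C² on [0, r_j] and on [r_j, ∞), satisfy −σ_s w_j″ + w_j = 0 on (0, r_j) and −σ_c w_j″ + w_j = 0 on (r_j, ∞), and satisfy the transmission condition σ_s w_j′(r_j − 0) = σ_c w_j′(r_j + 0). If w₁(0) = w₂(0), w₁′(0) = w₂′(0), and either w₁(0) ≠ 0 or w₁′(0) ≠ 0, then r₁ = r₂ and w₁ ≡ w₂ on [0,∞). -/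
open Set

noncomputable section

/-- `w` is a bounded solution of `-(σ w′)′ + w = 0` on `[0,∞)` for the piecewise
constant conductivity equal to `σ_s` on `[0, r]` and `σ_c` on `(r, ∞)`, with the
transmission condition `σ_s w′(r − 0) = σ_c w′(r + 0)` at the interface `r`. -/
def PiecewiseSol (σs σc r : ℝ) (w : ℝ → ℝ) : Prop :=
  ContinuousOn w (Ici 0) ∧
  (∃ C, ∀ ρ ∈ Ici (0:ℝ), |w ρ| ≤ C) ∧
  ContDiffOn ℝ 2 w (Icc 0 r) ∧ ContDiffOn ℝ 2 w (Ici r) ∧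
  (∀ ρ ∈ Ioo 0 r,
    σs * derivWithin (derivWithin w (Icc 0 r)) (Icc 0 r) ρ = w ρ) ∧
  (∀ ρ ∈ Ioi r,
    σc * derivWithin (derivWithin w (Ici r)) (Ici r) ρ = w ρ) ∧
  σs * derivWithin w (Icc 0 r) r = σc * derivWithin w (Ici r) r

/-!
Let `k, m > 0` with `σs * k ^ 2 = 1` and `σc * m ^ 2 = 1`. On each side of the interface the
equation factors into first-order ones: for a solution of `w'' = k ^ 2 w`, the modes `w' + k w` and
`w' - k w` are multiples of `exp (k x)` and `exp (-k x)`. Boundedness kills the growing mode on the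
outer side, so the transmission condition becomes a relation between the two inner modes at the
interface. Transported to the origin it reads `(k + m) P exp (k r) = (k - m) Q exp (-k r)`, where
`P` and `Q` are the values at `0` of the two modes, known from the Cauchy data. Nontrivial data and
`k ≠ m` give `(k - m) Q ≠ 0`, and then this equation determines `r`.
-/

open Filter Topology

lemma eq_of_hasDerivAt_zero_on_interior {S : Set ℝ} (hS : Convex ℝ S) {f : ℝ → ℝ}
    (hf : ContinuousOn f S) (hf' : ∀ x ∈ interior S, HasDerivAt f 0 x)
    {a b : ℝ} (ha : a ∈ S) (hb : b ∈ S) : f a = f b := by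
  wlog hab : a ≤ b generalizing a b
  · exact (this hb ha (le_of_not_ge hab)).symm
  have hdiff : DifferentiableOn ℝ f (interior S) := fun x hx =>
    (hf' x hx).differentiableAt.differentiableWithinAt
  exact le_antisymm
    (monotoneOn_of_deriv_nonneg hS hf hdiff (fun x hx => (hf' x hx).deriv.ge) ha hb hab)
    (antitoneOn_of_deriv_nonpos hS hf hdiff (fun x hx => (hf' x hx).deriv.le) ha hb hab)

lemma eq_mul_exp_of_hasDerivAt_on_interior {S : Set ℝ} (hS : Convex ℝ S) {u : ℝ → ℝ} {k : ℝ}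
    (hu : ContinuousOn u S) (hu' : ∀ x ∈ interior S, HasDerivAt u (k * u x) x)
    {a b : ℝ} (ha : a ∈ S) (hb : b ∈ S) : u b = u a * Real.exp (k * (b - a)) := by
  have hexp (x : ℝ) : HasDerivAt (fun y => Real.exp (-k * y)) (Real.exp (-k * x) * -k) x := by
    simpa using ((hasDerivAt_id x).const_mul (-k)).exp
  have hconst : u a * Real.exp (-k * a) = u b * Real.exp (-k * b) :=
    eq_of_hasDerivAt_zero_on_interior hS (f := fun y => u y * Real.exp (-k * y))
      (hu.mul (by fun_prop))
      (fun x hx => ((hu' x hx).mul (hexp x)).congr_deriv (by ring)) ha hb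
  calc u b = u b * Real.exp (-k * b) * Real.exp (k * b) := by
        rw [mul_assoc, ← Real.exp_add]; simp
    _ = u a * Real.exp (k * (b - a)) := by
        rw [← hconst, mul_assoc, ← Real.exp_add]; ring_nf

lemma eq_zero_of_abs_mul_exp_le {P B k : ℝ} (hk : 0 < k)
    (hB : ∀ t, 0 ≤ t → |P * Real.exp (k * t)| ≤ B) : P = 0 := by
  have htendsto : Tendsto (fun t => B * Real.exp (-(k * t))) atTop (𝓝 (B * 0)) :=
    (Real.tendsto_exp_neg_atTop_nhds_zero.comp (tendsto_id.const_mul_atTop hk)).const_mul B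
  have hle : ∀ᶠ t in atTop, |P| ≤ B * Real.exp (-(k * t)) := by
    filter_upwards [eventually_ge_atTop 0] with t ht
    rw [Real.exp_neg, ← div_eq_mul_inv, le_div_iff₀ (Real.exp_pos _)]
    simpa only [abs_mul, Real.abs_exp] using hB t ht
  exact abs_nonpos_iff.mp (by simpa only [mul_zero] using ge_of_tendsto htendsto hle)

lemma eq_of_mul_exp_eq_mul_exp_neg {A B k r₁ r₂ : ℝ} (hk : k ≠ 0) (hB : B ≠ 0)
    (h₁ : A * Real.exp (k * r₁) = B * Real.exp (-k * r₁))
    (h₂ : A * Real.exp (k * r₂) = B * Real.exp (-k * r₂)) : r₁ = r₂ := by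
  have solve {r : ℝ} (h : A * Real.exp (k * r) = B * Real.exp (-k * r)) :
      A = B * Real.exp (-2 * k * r) := by
    rw [show -2 * k * r = -k * r - k * r by ring, Real.exp_sub, ← mul_div_assoc, ← h,
      mul_div_cancel_right₀ _ (Real.exp_ne_zero _)]
  have hexp := Real.exp_injective (mul_left_cancel₀ hB ((solve h₁).symm.trans (solve h₂)))
  exact mul_left_cancel₀ (mul_ne_zero (neg_ne_zero.mpr two_ne_zero) hk) hexp

lemma exists_pos_mul_sq_eq_one {σ : ℝ} (hσ : 0 < σ) : ∃ k > 0, σ * k ^ 2 = 1 :=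
  ⟨√σ⁻¹, Real.sqrt_pos.mpr (inv_pos.mpr hσ), by
    rw [Real.sq_sqrt (inv_pos.mpr hσ).le, mul_inv_cancel₀ hσ.ne']⟩

/-- `HyperbolicSol k S w` says that `w` is `C²` on `S` and solves `w'' = k ^ 2 w` in the interior of
`S`. As in `PiecewiseSol`, derivatives are taken within `S`, so that they are one-sided at its
endpoints. -/
structure HyperbolicSol (k : ℝ) (S : Set ℝ) (w : ℝ → ℝ) : Prop where
  contDiffOn : ContDiffOn ℝ 2 w S
  derivWithin_derivWithin :
    ∀ x ∈ interior S, derivWithin (derivWithin w S) S x = k ^ 2 * w x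

/-- The exponential mode `w' + k w` of `w` on `S`. For a solution of `w'' = k ^ 2 w` it is a
multiple of `exp (k x)`; the other mode is obtained by replacing `k` with `-k`. -/
def expMode (k : ℝ) (S : Set ℝ) (w : ℝ → ℝ) (x : ℝ) : ℝ :=
  derivWithin w S x + k * w x

lemma expMode_sub_expMode_neg (k : ℝ) (S : Set ℝ) (w : ℝ → ℝ) (x : ℝ) :
    expMode k S w x - expMode (-k) S w x = 2 * k * w x := by
  simp only [expMode]; ring

namespace HyperbolicSol

variable {k : ℝ} {S : Set ℝ} {w : ℝ → ℝ}

lemma of_mul_sq_eq_one {σ : ℝ} (hk : σ * k ^ 2 = 1) (hw : ContDiffOn ℝ 2 w S)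
    (hode : ∀ x ∈ interior S, σ * derivWithin (derivWithin w S) S x = w x) :
    HyperbolicSol k S w where
  contDiffOn := hw
  derivWithin_derivWithin x hx := by
    rw [← hode x hx]; linear_combination -derivWithin (derivWithin w S) S x * hk

lemma neg (h : HyperbolicSol k S w) : HyperbolicSol (-k) S w :=
  ⟨h.contDiffOn, by simpa only [neg_sq] using h.derivWithin_derivWithin⟩

lemma hasDerivAt_expMode (h : HyperbolicSol k S w) (hS : UniqueDiffOn ℝ S) {x : ℝ}
    (hx : x ∈ interior S) : HasDerivAt (expMode k S w) (k * expMode k S w x) x := by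
  have hderiv {f : ℝ → ℝ} (hf : DifferentiableOn ℝ f S) : HasDerivAt f (derivWithin f S x) x :=
    (hf x (interior_subset hx)).hasDerivWithinAt.hasDerivAt (mem_interior_iff_mem_nhds.mp hx)
  have hw : DifferentiableOn ℝ w S := h.contDiffOn.differentiableOn (by norm_num)
  have hw' : DifferentiableOn ℝ (derivWithin w S) S :=
    (h.contDiffOn.derivWithin hS (m := 1) (by norm_num)).differentiableOn (by norm_num)
  refine ((hderiv hw').add ((hderiv hw).const_mul k)).congr_deriv ?_
  rw [h.derivWithin_derivWithin x hx, expMode]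
  ring

lemma expMode_eq_mul_exp (h : HyperbolicSol k S w) (hconv : Convex ℝ S) (hS : UniqueDiffOn ℝ S)
    {a b : ℝ} (ha : a ∈ S) (hb : b ∈ S) :
    expMode k S w b = expMode k S w a * Real.exp (k * (b - a)) :=
  eq_mul_exp_of_hasDerivAt_on_interior hconv
    ((h.contDiffOn.continuousOn_derivWithin hS (by norm_num)).add
      (h.contDiffOn.continuousOn.const_mul k))
    (fun _ hx => h.hasDerivAt_expMode hS hx) ha hb

lemma eqOn {v : ℝ → ℝ} (hv : HyperbolicSol k S v) (hw : HyperbolicSol k S w) (hk : k ≠ 0)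
    (hconv : Convex ℝ S) (hS : UniqueDiffOn ℝ S) {a : ℝ} (ha : a ∈ S) (hval : v a = w a)
    (hder : derivWithin v S a = derivWithin w S a) : EqOn v w S := by
  intro x hx
  have hmode (κ : ℝ) : expMode κ S v a = expMode κ S w a := by simp only [expMode, hval, hder]
  refine mul_left_cancel₀ (mul_ne_zero two_ne_zero hk) ?_
  rw [← expMode_sub_expMode_neg k S v, ← expMode_sub_expMode_neg k S w,
    hv.expMode_eq_mul_exp hconv hS ha hx, hw.expMode_eq_mul_exp hconv hS ha hx,
    hv.neg.expMode_eq_mul_exp hconv hS ha hx, hw.neg.expMode_eq_mul_exp hconv hS ha hx,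
    hmode, hmode]

lemma expMode_eq_zero_of_bounded {r C : ℝ} (h : HyperbolicSol k (Ici r) w) (hk : 0 < k)
    (hC : ∀ x ∈ Ici r, |w x| ≤ C) : expMode k (Ici r) w r = 0 := by
  set P := expMode k (Ici r) w r with hP
  set Q := expMode (-k) (Ici r) w r with hQ
  refine eq_zero_of_abs_mul_exp_le (B := 2 * k * C + |Q|) hk fun t ht => ?_
  have hrt : r + t ∈ Ici r := le_add_of_nonneg_right ht
  have hgrow := h.expMode_eq_mul_exp (convex_Ici r) (uniqueDiffOn_Ici r) self_mem_Ici hrt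
  have hdecay := h.neg.expMode_eq_mul_exp (convex_Ici r) (uniqueDiffOn_Ici r) self_mem_Ici hrt
  rw [add_sub_cancel_left] at hgrow hdecay
  have hexp : Real.exp (-k * t) ≤ 1 :=
    Real.exp_le_one_iff.mpr (mul_nonpos_of_nonpos_of_nonneg (neg_nonpos.mpr hk.le) ht)
  calc |P * Real.exp (k * t)|
      = |2 * k * w (r + t) + Q * Real.exp (-k * t)| := by
        rw [hP, hQ, ← hgrow, ← hdecay, ← expMode_sub_expMode_neg k (Ici r) w, sub_add_cancel]
    _ ≤ |2 * k * w (r + t)| + |Q * Real.exp (-k * t)| := abs_add_le _ _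
    _ = 2 * k * |w (r + t)| + |Q| * Real.exp (-k * t) := by
        rw [abs_mul, abs_mul Q, Real.abs_exp, abs_of_pos (mul_pos two_pos hk)]
    _ ≤ 2 * k * C + |Q| := by
        gcongr
        · exact hC _ hrt
        · exact mul_le_of_le_one_right (abs_nonneg Q) hexp

end HyperbolicSol

namespace PiecewiseSol

variable {σs σc k m r : ℝ} {w : ℝ → ℝ}

lemma hyperbolicSol_inner (h : PiecewiseSol σs σc r w) (hσk : σs * k ^ 2 = 1) :
    HyperbolicSol k (Icc 0 r) w := by
  obtain ⟨-, -, hw, -, hode, -⟩ := h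
  exact .of_mul_sq_eq_one hσk hw (by rwa [interior_Icc])

lemma hyperbolicSol_outer (h : PiecewiseSol σs σc r w) (hσm : σc * m ^ 2 = 1) :
    HyperbolicSol m (Ici r) w := by
  obtain ⟨-, -, -, hw, -, hode, -⟩ := h
  exact .of_mul_sq_eq_one hσm hw (by rwa [interior_Ici])

lemma derivWithin_outer (h : PiecewiseSol σs σc r w) (hr : 0 ≤ r) (hm : 0 < m)
    (hσm : σc * m ^ 2 = 1) : derivWithin w (Ici r) r = -m * w r := by
  have houter := h.hyperbolicSol_outer hσm
  obtain ⟨-, ⟨C, hC⟩, -⟩ := h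
  have hgrow : derivWithin w (Ici r) r + m * w r = 0 :=
    houter.expMode_eq_zero_of_bounded hm fun x hx => hC x (hr.trans hx)
  linear_combination hgrow

lemma mul_derivWithin_inner (h : PiecewiseSol σs σc r w) (hr : 0 ≤ r) (hm : 0 < m)
    (hσk : σs * k ^ 2 = 1) (hσm : σc * m ^ 2 = 1) :
    m * derivWithin w (Icc 0 r) r = -k ^ 2 * w r := by
  have houter := h.derivWithin_outer hr hm hσm
  obtain ⟨-, -, -, -, -, -, htrans⟩ := h
  rw [houter] at htrans
  linear_combination k ^ 2 * m * htrans - m * derivWithin w (Icc 0 r) r * hσk - k ^ 2 * w r * hσm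

lemma expMode_interface (h : PiecewiseSol σs σc r w) (hr : 0 ≤ r) (hm : 0 < m)
    (hσk : σs * k ^ 2 = 1) (hσm : σc * m ^ 2 = 1) :
    (k + m) * expMode k (Icc 0 r) w r = (k - m) * expMode (-k) (Icc 0 r) w r := by
  simp only [expMode]
  linear_combination 2 * h.mul_derivWithin_inner hr hm hσk hσm

lemma expMode_origin (h : PiecewiseSol σs σc r w) (hr : 0 < r) (hm : 0 < m)
    (hσk : σs * k ^ 2 = 1) (hσm : σc * m ^ 2 = 1) :
    (k + m) * expMode k (Icc 0 r) w 0 * Real.exp (k * r) =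
      (k - m) * expMode (-k) (Icc 0 r) w 0 * Real.exp (-k * r) := by
  have transport {κ : ℝ} (hinner : HyperbolicSol κ (Icc 0 r) w) :
      expMode κ (Icc 0 r) w r = expMode κ (Icc 0 r) w 0 * Real.exp (κ * r) := by
    simpa only [sub_zero] using hinner.expMode_eq_mul_exp (convex_Icc 0 r) (uniqueDiffOn_Icc hr)
      (left_mem_Icc.mpr hr.le) (right_mem_Icc.mpr hr.le)
  have hinner := h.hyperbolicSol_inner hσk
  rw [mul_assoc, mul_assoc, ← transport hinner, ← transport hinner.neg]
  exact h.expMode_interface hr.le hm hσk hσm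

lemma expMode_neg_origin_ne_zero (h : PiecewiseSol σs σc r w) (hr : 0 < r) (hk : 0 < k)
    (hm : 0 < m) (hσk : σs * k ^ 2 = 1) (hσm : σc * m ^ 2 = 1)
    (hnontriv : w 0 ≠ 0 ∨ derivWithin w (Icc 0 r) 0 ≠ 0) :
    expMode (-k) (Icc 0 r) w 0 ≠ 0 := by
  intro hneg
  have hpos : expMode k (Icc 0 r) w 0 = 0 := by
    have hrel := h.expMode_origin hr hm hσk hσm
    simpa [hneg, (add_pos hk hm).ne'] using hrel
  have hw : w 0 = 0 := by
    have hsub := expMode_sub_expMode_neg k (Icc 0 r) w 0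
    rw [hpos, hneg, sub_zero, eq_comm] at hsub
    exact (mul_eq_zero.mp hsub).resolve_left (mul_pos two_pos hk).ne'
  have hw' : derivWithin w (Icc 0 r) 0 = 0 := by simpa [expMode, hw] using hpos
  exact hnontriv.elim (· hw) (· hw')

lemma interface_unique {r₁ r₂ : ℝ} {w₁ w₂ : ℝ → ℝ} (h₁ : PiecewiseSol σs σc r₁ w₁)
    (h₂ : PiecewiseSol σs σc r₂ w₂) (hr₁ : 0 < r₁) (hr₂ : 0 < r₂) (hk : 0 < k) (hm : 0 < m)
    (hkm : k ≠ m) (hσk : σs * k ^ 2 = 1) (hσm : σc * m ^ 2 = 1) (hval : w₁ 0 = w₂ 0)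
    (hder : derivWithin w₁ (Icc 0 r₁) 0 = derivWithin w₂ (Icc 0 r₂) 0)
    (hnontriv : w₁ 0 ≠ 0 ∨ derivWithin w₁ (Icc 0 r₁) 0 ≠ 0) : r₁ = r₂ := by
  have hmode (κ : ℝ) : expMode κ (Icc 0 r₂) w₂ 0 = expMode κ (Icc 0 r₁) w₁ 0 := by
    simp only [expMode, hval, hder]
  have hQ := h₁.expMode_neg_origin_ne_zero hr₁ hk hm hσk hσm hnontriv
  have hrel₂ := h₂.expMode_origin hr₂ hm hσk hσm
  rw [hmode, hmode] at hrel₂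
  exact eq_of_mul_exp_eq_mul_exp_neg hk.ne' (mul_ne_zero (sub_ne_zero.mpr hkm) hQ)
    (h₁.expMode_origin hr₁ hm hσk hσm) hrel₂

lemma eqOn {v : ℝ → ℝ} (hv : PiecewiseSol σs σc r v) (hw : PiecewiseSol σs σc r w) (hr : 0 < r)
    (hm : 0 < m) (hσk : σs * k ^ 2 = 1) (hσm : σc * m ^ 2 = 1) (hval : v 0 = w 0)
    (hder : derivWithin v (Icc 0 r) 0 = derivWithin w (Icc 0 r) 0) : EqOn v w (Ici 0) := by
  have hk : k ≠ 0 := by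
    rintro rfl
    simp at hσk
  have hinner : EqOn v w (Icc 0 r) :=
    (hv.hyperbolicSol_inner hσk).eqOn (hw.hyperbolicSol_inner hσk) hk (convex_Icc 0 r)
      (uniqueDiffOn_Icc hr) (left_mem_Icc.mpr hr.le) hval hder
  have hval_r : v r = w r := hinner (right_mem_Icc.mpr hr.le)
  have hder_r : derivWithin v (Ici r) r = derivWithin w (Ici r) r := by
    rw [hv.derivWithin_outer hr.le hm hσm, hw.derivWithin_outer hr.le hm hσm, hval_r]
  have houter : EqOn v w (Ici r) :=
    (hv.hyperbolicSol_outer hσm).eqOn (hw.hyperbolicSol_outer hσm) hm.ne' (convex_Ici r)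
      (uniqueDiffOn_Ici r) self_mem_Ici hval_r hder_r
  rw [← Icc_union_Ici_eq_Ici hr.le]
  exact hinner.union houter

end PiecewiseSol

/-- **Proposition A.2 (unique determination of the interface from Cauchy data).** -/
theorem stmt_17 (σc σs : ℝ) (hσc : 0 < σc) (hσs : 0 < σs) (hne : σc ≠ σs)
    (r₁ r₂ : ℝ) (hr₁ : 0 < r₁) (hr₁₂ : r₁ ≤ r₂)
    (w₁ w₂ : ℝ → ℝ)
    (h₁ : PiecewiseSol σs σc r₁ w₁) (h₂ : PiecewiseSol σs σc r₂ w₂)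
    (hval : w₁ 0 = w₂ 0)
    (hder : derivWithin w₁ (Icc 0 r₁) 0 = derivWithin w₂ (Icc 0 r₂) 0)
    (hnontriv : w₁ 0 ≠ 0 ∨ derivWithin w₁ (Icc 0 r₁) 0 ≠ 0) :
    r₁ = r₂ ∧ ∀ ρ ∈ Ici (0:ℝ), w₁ ρ = w₂ ρ := by
  obtain ⟨k, hk, hσk⟩ := exists_pos_mul_sq_eq_one hσs
  obtain ⟨m, hm, hσm⟩ := exists_pos_mul_sq_eq_one hσc
  have hkm : k ≠ m := by
    rintro rfl
    exact hne (mul_right_cancel₀ (pow_ne_zero 2 hk.ne') (hσm.trans hσk.symm))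
  obtain rfl : r₁ = r₂ := h₁.interface_unique h₂ hr₁ (hr₁.trans_le hr₁₂) hk hm hkm hσk hσm
    hval hder hnontriv
  exact ⟨rfl, h₁.eqOn h₂ hr₁ hm hσk hσm hval hder⟩
end
end
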